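/- Let s ∈ [√2,2) be N-periodic, i.e. the critical point 1/2 is periodic for the tent map f_s with minimal period N. Then there exists ε₀ > 0 such that for every ε ∈ (0,ε₀), every ε-pseudotrajectory of f_s can be ((s−1)^{−1} + s^4)·(N+1)·s^{N+1}·ε-shadowed: for every ε-pseudotrajectory (x_k) in [0,1] there exists p ∈ [0,1] with |x_k − f_s^k(p)| ≤ ((s−1)^{−1} + s^4)·(N+1)·s^{N+1}·ε for all k ≥ 0. -/

import Mathlib

open Set

/-- The tent map with slope `s`, extended to all of ℝ. -/
noncomputable def tentMap (s x : ℝ) : ℝ := if x ≤ 1 / 2 then s * x else s * (1 - x)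

/-! Let `x` be an `ε`-pseudotrajectory and put `δ = (s - 1)⁻¹ ε`. Follow the itinerary of `x`:
replace `f_s` at time `k` by the affine branch used at `x k`, prolonged across `1/2`. These branches
expand by the factor `s`, so their inverses map the `δ`-ball around `x (k + 1)` into the one around
`x k`, and compactness yields an orbit `p` of the sequence of branches with `|x k - p k| ≤ δ`.

The true trajectory `q` of `p 0` can leave `p` only when `p k` and `x k` lie on different sides of
`1/2`. Then both are `δ`-close to `1/2`, and after one step `p` and `q` are mirror images about
`f_s (1/2)`. As long as the critical orbit is far from `1/2` compared with `δ`, all the points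
concerned lie on the same side of `1/2`, so `p` and `q` stay mirror images about the critical orbit,
at a distance multiplied by `s` in each step. When the critical orbit is back at `1/2`, the two
points are `p` and `1 - p`, which have the same image, and the process starts afresh. The error is
therefore amplified over at most one period, to at most `(1 + 2 s ^ N) δ`. -/

open Filter Function Topology

section InverseLimit

open CategoryTheory

theorem exists_compatible_sequence_of_compact {X : ℕ → Type*} [∀ k, TopologicalSpace (X k)]
    [∀ k, CompactSpace (X k)] [∀ k, T2Space (X k)] [∀ k, Nonempty (X k)]
    (φ : ∀ k, X (k + 1) → X k) (hφ : ∀ k, Continuous (φ k)) :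
    ∃ p : ∀ k, X k, ∀ k, φ k (p (k + 1)) = p k := by
  let F : ℕᵒᵖ ⥤ TopCat :=
    Functor.ofOpSequence (X := fun k => TopCat.of (X k)) fun k => TopCat.ofHom ⟨φ k, hφ k⟩
  have hcompact (j) : CompactSpace (F.obj j) := inferInstanceAs (CompactSpace (X j.unop))
  have ht2 (j) : T2Space (F.obj j) := inferInstanceAs (T2Space (X j.unop))
  have hnonempty (j) : Nonempty (F.obj j) := inferInstanceAs (Nonempty (X j.unop))
  obtain ⟨p, hp⟩ := TopCat.nonempty_limitCone_of_compact_t2_cofiltered_system F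
  refine ⟨fun k => p (.op k), fun k => ?_⟩
  have hpk := hp (homOfLE (Nat.le_add_right k 1)).op
  rwa [Functor.ofOpSequence_map_homOfLE_succ] at hpk

end InverseLimit

/-- The affine branch of the tent map in force at `a`, prolonged to all of `ℝ`. -/
noncomputable def tentBranch (s a x : ℝ) : ℝ := if a ≤ 1 / 2 then s * x else s * (1 - x)

/-- The inverse of the affine map `tentBranch s a`, for `s ≠ 0`. -/
noncomputable def tentBranchInv (s a y : ℝ) : ℝ := if a ≤ 1 / 2 then y / s else 1 - y / s

section Branches

variable {s : ℝ}

theorem tentBranch_self (s x : ℝ) : tentBranch s x x = tentMap s x := rfl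

theorem tentMap_half (s : ℝ) : tentMap s (1 / 2) = s / 2 := by
  rw [tentMap, if_pos le_rfl]
  ring

theorem tentBranch_half (s a : ℝ) : tentBranch s a (1 / 2) = tentMap s (1 / 2) := by
  rw [tentMap_half]
  unfold tentBranch
  split_ifs <;> ring

theorem tentMap_one_sub (s x : ℝ) : tentMap s (1 - x) = tentMap s x := by
  unfold tentMap
  split_ifs
  · rw [show x = 1 / 2 by linarith]
    ring
  · ring
  · ring
  · linarith

theorem abs_tentBranch_sub (hs : 0 ≤ s) (a x y : ℝ) :
    |tentBranch s a x - tentBranch s a y| = s * |x - y| := by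
  rw [← abs_of_nonneg hs, ← abs_mul, abs_of_nonneg hs]
  unfold tentBranch
  split_ifs
  · rw [mul_sub]
  · rw [abs_sub_comm]
    ring_nf

theorem tentBranch_add_of_add_eq {x y c : ℝ} (h : x + y = 2 * c) (a : ℝ) :
    tentBranch s a x + tentBranch s a y = 2 * tentBranch s a c := by
  unfold tentBranch
  split_ifs
  · linear_combination s * h
  · linear_combination -s * h

theorem tentBranch_congr {a b : ℝ} (h : |a - b| < |b - 1 / 2|) :
    tentBranch s a = tentBranch s b := by
  have hside : a ≤ 1 / 2 ↔ b ≤ 1 / 2 := by grind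
  simp only [funext_iff, tentBranch, hside, implies_true]

theorem tentBranch_eq_tentMap_or (s a x : ℝ) :
    tentBranch s a x = tentMap s x ∨
      tentBranch s a (1 - x) = tentMap s x ∧ |x - 1 / 2| ≤ |a - x| := by
  unfold tentBranch tentMap
  grind

theorem tentBranch_tentBranchInv (hs : s ≠ 0) (a y : ℝ) :
    tentBranch s a (tentBranchInv s a y) = y := by
  unfold tentBranch tentBranchInv
  split_ifs <;> field_simp
  ring

theorem continuous_tentBranchInv (s a : ℝ) : Continuous (tentBranchInv s a) := by
  unfold tentBranchInv
  split_ifs <;> fun_prop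

theorem mapsTo_tentBranchInv_Icc (hs : 1 ≤ s) (a : ℝ) :
    MapsTo (tentBranchInv s a) (Icc 0 1) (Icc 0 1) := by
  intro y hy
  have hnonneg : 0 ≤ y / s := div_nonneg hy.1 (by linarith)
  have hle : y / s ≤ 1 := div_le_one_of_le₀ (hy.2.trans hs) (by linarith)
  unfold tentBranchInv
  split_ifs
  · exact ⟨hnonneg, hle⟩
  · exact ⟨by linarith, by linarith⟩

theorem mapsTo_tentBranchInv_closedBall (hs : 0 < s) {a b δ : ℝ}
    (hab : |tentMap s a - b| ≤ (s - 1) * δ) :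
    MapsTo (tentBranchInv s a) (Metric.closedBall b δ) (Metric.closedBall a δ) := by
  intro y hy
  rw [Metric.mem_closedBall, dist_comm, Real.dist_eq] at hy ⊢
  refine le_of_mul_le_mul_left ?_ hs
  calc s * |a - tentBranchInv s a y| = |tentMap s a - y| := by
        rw [← abs_tentBranch_sub hs.le a, tentBranch_tentBranchInv hs.ne', tentBranch_self]
    _ ≤ |tentMap s a - b| + |b - y| := abs_sub_le _ _ _
    _ ≤ s * δ := by linarith

theorem exists_tentBranch_orbit_near (hs : 1 ≤ s) {δ : ℝ} (hδ : 0 ≤ δ) {x : ℕ → ℝ}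
    (hx : ∀ k, x k ∈ Icc (0 : ℝ) 1) (hpseudo : ∀ k, |tentMap s (x k) - x (k + 1)| ≤ (s - 1) * δ) :
    ∃ p : ℕ → ℝ, (∀ k, p k ∈ Icc (0 : ℝ) 1) ∧ (∀ k, |x k - p k| ≤ δ) ∧
      ∀ k, p (k + 1) = tentBranch s (x k) (p k) := by
  have hs0 : 0 < s := by linarith
  let K (k : ℕ) : Set ℝ := Icc 0 1 ∩ Metric.closedBall (x k) δ
  have hmaps (k) : MapsTo (tentBranchInv s (x k)) (K (k + 1)) (K k) :=
    (mapsTo_tentBranchInv_Icc hs _).inter_inter (mapsTo_tentBranchInv_closedBall hs0 (hpseudo k))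
  have hcompact (k) : CompactSpace (K k) :=
    isCompact_iff_compactSpace.1 (isCompact_Icc.inter_right Metric.isClosed_closedBall)
  have hnonempty (k) : Nonempty (K k) := ⟨x k, hx k, Metric.mem_closedBall_self hδ⟩
  obtain ⟨p, hp⟩ := exists_compatible_sequence_of_compact (X := fun k => K k)
    (fun k => (hmaps k).restrict)
    fun k => (continuous_tentBranchInv s (x k)).restrict (hmaps k)
  refine ⟨fun k => p k, fun k => (p k).2.1, fun k => ?_, fun k => ?_⟩
  · rw [abs_sub_comm]
    exact (p k).2.2
  · dsimp only
    rw [← hp k, MapsTo.val_restrict_apply, tentBranch_tentBranchInv hs0.ne']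

end Branches

/-- `p` and `q` are mirror images about `c`, at distance at most `η` from it. -/
structure IsMirrorPair (c η p q : ℝ) : Prop where
  add_eq : p + q = 2 * c
  abs_left_sub_le : |p - c| ≤ η

section MirrorPairs

variable {s c η p q : ℝ}

theorem IsMirrorPair.abs_sub_le_two_mul (h : IsMirrorPair c η p q) : |p - q| ≤ 2 * η := by
  have hq : p - q = 2 * (p - c) := by linear_combination -h.add_eq
  rw [hq, abs_mul, abs_two]
  linarith [h.abs_left_sub_le]

theorem IsMirrorPair.abs_right_sub_le (h : IsMirrorPair c η p q) : |q - c| ≤ η := by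
  have hq : q - c = -(p - c) := by linear_combination h.add_eq
  rw [hq, abs_neg]
  exact h.abs_left_sub_le

theorem IsMirrorPair.map_tentBranch (hs : 0 ≤ s) (h : IsMirrorPair c η p q) (a : ℝ) :
    IsMirrorPair (tentBranch s a c) (s * η) (tentBranch s a p) (tentBranch s a q) where
  add_eq := tentBranch_add_of_add_eq h.add_eq a
  abs_left_sub_le := by
    rw [abs_tentBranch_sub hs]
    exact mul_le_mul_of_nonneg_left h.abs_left_sub_le hs

theorem IsMirrorPair.map_tentMap (hs : 0 ≤ s) (h : IsMirrorPair c η p q) {a : ℝ}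
    (hgap : η + |a - p| < |c - 1 / 2|) :
    IsMirrorPair (tentMap s c) (s * η) (tentBranch s a p) (tentMap s q) := by
  have ha : tentBranch s a = tentBranch s c := by
    apply tentBranch_congr
    linarith [abs_sub_le a p c, h.abs_left_sub_le]
  have hq : tentBranch s q = tentBranch s c := by
    apply tentBranch_congr
    linarith [h.abs_right_sub_le, abs_nonneg (a - p)]
  rw [← tentBranch_self s q, ← tentBranch_self s c, ha, hq]
  exact h.map_tentBranch hs c

theorem tentMap_eq_or_isMirrorPair (hs : 0 ≤ s) {a δ : ℝ} (ha : |a - p| ≤ δ) :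
    tentMap s p = tentBranch s a p ∨
      IsMirrorPair (tentMap s (1 / 2)) (s * δ) (tentBranch s a p) (tentMap s p) := by
  rcases tentBranch_eq_tentMap_or s a p with heq | ⟨heq, hnear⟩
  · exact .inl heq.symm
  · right
    have hpair : IsMirrorPair (1 / 2) δ p (1 - p) := ⟨by ring, hnear.trans ha⟩
    rw [← heq, ← tentBranch_half s a]
    exact hpair.map_tentBranch hs a

end MirrorPairs

section Shadowing

variable {s : ℝ} {N : ℕ}

theorem iterate_tentMap_eq_or_isMirrorPair (hs : 0 ≤ s) (hN : 1 ≤ N)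
    (hper : IsPeriodicPt (tentMap s) N (1 / 2)) {δ : ℝ}
    (hgap : ∀ j < N, (tentMap s)^[j] (1 / 2) ≠ 1 / 2 →
      s ^ j * δ + δ < |(tentMap s)^[j] (1 / 2) - 1 / 2|)
    {x p : ℕ → ℝ} (hnear : ∀ k, |x k - p k| ≤ δ)
    (horbit : ∀ k, p (k + 1) = tentBranch s (x k) (p k)) (k : ℕ) :
    (tentMap s)^[k] (p 0) = p k ∨
      ∃ j ≤ N, IsMirrorPair ((tentMap s)^[j] (1 / 2)) (s ^ j * δ) (p k)
        ((tentMap s)^[k] (p 0)) := by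
  induction k with
  | zero => exact .inl rfl
  | succ k ih =>
    rw [iterate_succ_apply', horbit]
    generalize (tentMap s)^[k] (p 0) = q at ih ⊢
    have restart (hq : tentMap s q = tentMap s (p k)) :
        tentMap s q = tentBranch s (x k) (p k) ∨
          ∃ j ≤ N, IsMirrorPair ((tentMap s)^[j] (1 / 2)) (s ^ j * δ)
            (tentBranch s (x k) (p k)) (tentMap s q) := by
      rw [hq]
      refine (tentMap_eq_or_isMirrorPair hs (hnear k)).imp_right fun h => ⟨1, hN, ?_⟩
      rwa [iterate_one, pow_one]
    rcases ih with rfl | ⟨j, hj, hpair⟩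
    · exact restart rfl
    by_cases hreturn : (tentMap s)^[j] (1 / 2) = 1 / 2
    · apply restart
      have hsum := hpair.add_eq
      rw [hreturn] at hsum
      rw [← tentMap_one_sub s q]
      congr 1
      linarith
    · have hjN : j < N := hj.lt_of_ne fun h => hreturn (h ▸ hper)
      refine .inr ⟨j + 1, hjN, ?_⟩
      rw [iterate_succ_apply', pow_succ', mul_assoc]
      exact hpair.map_tentMap hs (by linarith [hgap j hjN hreturn, hnear k])

theorem exists_tentMap_shadowing_of_gap (hs : 1 ≤ s) (hN : 1 ≤ N)
    (hper : IsPeriodicPt (tentMap s) N (1 / 2)) {δ : ℝ} (hδ : 0 ≤ δ)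
    (hgap : ∀ j < N, (tentMap s)^[j] (1 / 2) ≠ 1 / 2 →
      s ^ j * δ + δ < |(tentMap s)^[j] (1 / 2) - 1 / 2|)
    {x : ℕ → ℝ} (hx : ∀ k, x k ∈ Icc (0 : ℝ) 1)
    (hpseudo : ∀ k, |tentMap s (x k) - x (k + 1)| ≤ (s - 1) * δ) :
    ∃ p ∈ Icc (0 : ℝ) 1, ∀ k, |x k - (tentMap s)^[k] p| ≤ (1 + 2 * s ^ N) * δ := by
  obtain ⟨p, hp, hnear, horbit⟩ := exists_tentBranch_orbit_near hs hδ hx hpseudo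
  refine ⟨p 0, hp 0, fun k => ?_⟩
  have hdist : |p k - (tentMap s)^[k] (p 0)| ≤ 2 * (s ^ N * δ) := by
    rcases iterate_tentMap_eq_or_isMirrorPair (by linarith) hN hper hgap hnear horbit k with
      heq | ⟨j, hj, hpair⟩
    · rw [heq, sub_self, abs_zero]
      positivity
    · calc |p k - (tentMap s)^[k] (p 0)| ≤ 2 * (s ^ j * δ) := hpair.abs_sub_le_two_mul
        _ ≤ 2 * (s ^ N * δ) := by gcongr
  linarith [abs_sub_le (x k) (p k) ((tentMap s)^[k] (p 0)), hnear k]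

theorem eventually_forall_lt_mul_lt_abs (a b : ℕ → ℝ) (N : ℕ) :
    ∀ᶠ ε in 𝓝 (0 : ℝ), ∀ j < N, b j ≠ 0 → a j * ε < |b j| := by
  refine (eventually_all_finite (finite_lt_nat N)).2 fun j _ => ?_
  by_cases hb : b j = 0
  · simp [hb]
  have hlim : Tendsto (fun ε => a j * ε) (𝓝 0) (𝓝 0) :=
    (continuous_const_mul (a j)).tendsto' 0 0 (mul_zero _)
  exact (hlim.eventually_lt_const (abs_pos.2 hb)).mono fun _ h _ => h

theorem eventually_exists_tentMap_shadowing (hs : 1 < s) (hN : 1 ≤ N)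
    (hper : IsPeriodicPt (tentMap s) N (1 / 2)) :
    ∀ᶠ ε in 𝓝[>] (0 : ℝ), ∀ x : ℕ → ℝ, (∀ k, x k ∈ Icc (0 : ℝ) 1) →
      (∀ k, |tentMap s (x k) - x (k + 1)| ≤ ε) →
      ∃ p ∈ Icc (0 : ℝ) 1, ∀ k,
        |x k - (tentMap s)^[k] p| ≤ (1 + 2 * s ^ N) * ((s - 1)⁻¹ * ε) := by
  have hs1 : 0 < s - 1 := sub_pos.2 hs
  have hgap := eventually_forall_lt_mul_lt_abs (fun j => (s ^ j + 1) * (s - 1)⁻¹)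
    (fun j => (tentMap s)^[j] (1 / 2) - 1 / 2) N
  filter_upwards [hgap.filter_mono nhdsWithin_le_nhds, self_mem_nhdsWithin] with ε hgap hε x hx hps
  have hε : 0 < ε := hε
  refine exists_tentMap_shadowing_of_gap hs.le hN hper (by positivity) (fun j hj hne => ?_) hx
    fun k => ?_
  · linarith [hgap j hj (sub_ne_zero.2 hne)]
  · rw [mul_inv_cancel_left₀ hs1.ne']
    exact hps k

theorem two_le_of_isPeriodicPt_tentMap_half (hs : s ≠ 1) (hN : 1 ≤ N)
    (hper : IsPeriodicPt (tentMap s) N (1 / 2)) : 2 ≤ N := by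
  refine hN.lt_of_ne' fun h => hs ?_
  rw [h, IsPeriodicPt, iterate_one, IsFixedPt, tentMap_half] at hper
  linarith

theorem one_add_two_mul_pow_le (hs : 1 ≤ s) (hN : 2 ≤ N) :
    1 + 2 * s ^ N ≤ (N + 1) * s ^ (N + 1) := by
  have hN' : (2 : ℝ) ≤ N := by exact_mod_cast hN
  calc 1 + 2 * s ^ N ≤ (2 + 1) * s ^ N := by linarith [one_le_pow₀ hs (n := N)]
    _ ≤ (N + 1) * s ^ (N + 1) := by
      gcongr
      exact N.le_succ

end Shadowing

theorem tent_map_periodic_parameter_lipschitz_shadowing_general {s : ℝ} (hs : 1 < s) {N : ℕ}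
    (hN : 1 ≤ N) (hper : IsPeriodicPt (tentMap s) N (1 / 2)) :
    ∃ ε₀ > (0 : ℝ), ∀ ε ∈ Ioo (0 : ℝ) ε₀, ∀ x : ℕ → ℝ,
      (∀ k : ℕ, x k ∈ Icc (0 : ℝ) 1) →
      (∀ k : ℕ, |tentMap s (x k) - x (k + 1)| ≤ ε) →
      ∃ p ∈ Icc (0 : ℝ) 1, ∀ k : ℕ,
        |x k - (tentMap s)^[k] p| ≤ ((s - 1)⁻¹ + s ^ 4) * (N + 1) * s ^ (N + 1) * ε := by
  obtain ⟨ε₀, hε₀, hshadow⟩ :=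
    mem_nhdsGT_iff_exists_Ioo_subset.1 (eventually_exists_tentMap_shadowing hs hN hper)
  refine ⟨ε₀, hε₀, fun ε hε x hx hpseudo => ?_⟩
  obtain ⟨p, hp, hpx⟩ := hshadow hε x hx hpseudo
  refine ⟨p, hp, fun k => (hpx k).trans ?_⟩
  have hN2 : 2 ≤ N := two_le_of_isPeriodicPt_tentMap_half hs.ne' hN hper
  have : 0 < s - 1 := sub_pos.2 hs
  have hε0 : 0 < ε := hε.1
  calc (1 + 2 * s ^ N) * ((s - 1)⁻¹ * ε) ≤ ((N + 1) * s ^ (N + 1)) * ((s - 1)⁻¹ * ε) := by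
        gcongr
        exact one_add_two_mul_pow_le hs.le hN2
    _ = (s - 1)⁻¹ * (N + 1) * s ^ (N + 1) * ε := by ring
    _ ≤ ((s - 1)⁻¹ + s ^ 4) * (N + 1) * s ^ (N + 1) * ε := by
        gcongr
        exact le_add_of_nonneg_right (by positivity)

/-- Coven–Kan–Yorke: if the critical point 1/2 is periodic with minimal period N
for f_s, then f_s has standard shadowing with the explicit Lipschitz accuracy
((s−1)⁻¹ + s⁴)·(N+1)·s^{N+1}·ε. -/
theorem tent_map_periodic_parameter_lipschitz_shadowing
    (s : ℝ) (hs : Real.sqrt 2 ≤ s) (hs2 : s < 2)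
    (N : ℕ) (hN : 1 ≤ N)
    (hper : (tentMap s)^[N] (1 / 2) = 1 / 2)
    (hmin : ∀ k, 0 < k → k < N → (tentMap s)^[k] (1 / 2) ≠ 1 / 2) :
    ∃ ε₀ > (0 : ℝ), ∀ ε ∈ Ioo (0 : ℝ) ε₀, ∀ x : ℕ → ℝ,
      (∀ k : ℕ, x k ∈ Icc (0 : ℝ) 1) →
      (∀ k : ℕ, |tentMap s (x k) - x (k + 1)| ≤ ε) →
      ∃ p ∈ Icc (0 : ℝ) 1, ∀ k : ℕ,
        |x k - (tentMap s)^[k] p| ≤ ((s - 1)⁻¹ + s ^ 4) * (N + 1) * s ^ (N + 1) * ε := by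
  exact tent_map_periodic_parameter_lipschitz_shadowing_general
    (Real.one_lt_sqrt_two.trans_le hs) hN hper
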